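/- For every relational vocabulary ρ and all k, ℓ, q ∈ ℕ there exist q*, r* ∈ ℕ such that the following holds. Let B be a ρ-structure, φ(x̄; ȳ) a first-order formula over ρ of quantifier rank at most q with |x̄| = k and |ȳ| = ℓ, and v̄ = (v₁,…,v_ℓ) ∈ U(B)^ℓ. Let 0 ≤ m ≤ ℓ, v̄° = (v₁,…,v_m), v̄• = (v_{m+1},…,v_ℓ). Let ū, ū' ∈ U(B)^k satisfy N_{r*}(ū v̄°) ∩ N_{r*}(v̄•) = ∅, N_{r*}(ū' v̄°) ∩ N_{r*}(v̄•) = ∅, and ltp_{q*,r*}(B, ū v̄°) = ltp_{q*,r*}(B, ū' v̄°). Then B ⊨ φ(ū; v̄) if and only if B ⊨ φ(ū'; v̄). -/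

import Mathlib

open FirstOrder FirstOrder.Language

universe w

/-- The quantifier rank of a first-order (bounded) formula: the nesting depth of quantifiers. -/
def qRank {L : FirstOrder.Language} : ∀ {α : Type*} {n : ℕ}, L.BoundedFormula α n → ℕ
  | _, _, .falsum => 0
  | _, _, .equal _ _ => 0
  | _, _, .rel _ _ => 0
  | _, _, .imp f g => max (qRank f) (qRank g)
  | _, _, .all f => qRank f + 1

/-- Adjacency in the Gaifman graph of a structure: two distinct elements are adjacent iff
they occur together in some tuple of some relation. -/
def gaifmanAdj (L : FirstOrder.Language) (M : Type w) [L.Structure M] (a b : M) : Prop :=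
  a ≠ b ∧ ∃ (n : ℕ) (R : L.Relations n) (t : Fin n → M),
    Structure.RelMap R t ∧ (∃ i, t i = a) ∧ (∃ j, t j = b)

/-- `distLE L M r a b` means the distance between `a` and `b` in the Gaifman graph of `M`
is at most `r`. -/
def distLE (L : FirstOrder.Language) (M : Type w) [L.Structure M] : ℕ → M → M → Prop
  | 0, a, b => a = b
  | r + 1, a, b => a = b ∨ ∃ c, gaifmanAdj L M a c ∧ distLE L M r c b

theorem distLE_self (L : FirstOrder.Language) (M : Type w) [L.Structure M] (r : ℕ) (a : M) :
    distLE L M r a a := by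
  cases r with
  | zero => rfl
  | succ r => exact Or.inl rfl

/-- The `r`-neighbourhood of a tuple: all elements at Gaifman distance at most `r`
from some component of the tuple. -/
def nbhd (L : FirstOrder.Language) (M : Type w) [L.Structure M] (r : ℕ) {k : ℕ}
    (u : Fin k → M) : Set M :=
  {b | ∃ i, distLE L M r (u i) b}

/-- `IsDistFormula L r d` says that the formula `d`, with two free variables, expresses
that the Gaifman distance between its two arguments is at most `r` (this is the property
of the formula `δ_{≤r}`). -/
def IsDistFormula.{v} (L : FirstOrder.Language) (r : ℕ) (d : L.Formula (Fin 2)) : Prop :=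
  ∀ (M : Type v) [L.Structure M], ∀ a b : M, d.Realize ![a, b] ↔ distLE L M r a b

/-- The radius-`r` relativisation of a formula with free variables `x_0, …, x_{k-1}`,
relative to a formula `d = δ_{≤r}` expressing distance at most `r`: every (universal)
quantifier `∀ y ψ` is replaced by `∀ y (⋁_i δ_{≤r}(x_i, y) → ψ)` (and consequently every
existential quantifier `∃ y ψ` by `∃ y (⋁_i δ_{≤r}(x_i, y) ∧ ψ)`). -/
def relativize {L : FirstOrder.Language} (d : L.Formula (Fin 2)) :
    ∀ {k n : ℕ}, L.BoundedFormula (Fin k) n → L.BoundedFormula (Fin k) n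
  | _, _, .falsum => .falsum
  | _, _, .equal t₁ t₂ => .equal t₁ t₂
  | _, _, .rel R ts => .rel R ts
  | _, _, .imp f g => (relativize d f).imp (relativize d g)
  | k, n, .all f =>
      ((((List.finRange k).map fun i =>
          BoundedFormula.relabel (![Sum.inl i, Sum.inr (Fin.last n)] : Fin 2 → (Fin k) ⊕ (Fin (n + 1))) d).foldr
            (· ⊔ ·) ⊥).imp (relativize d f)).all

/-- A formula is syntactically `r`-local (w.r.t. the distance formula `d = δ_{≤r}`) if it is
the radius-`r` relativisation of some formula. -/
def SynLocal {L : FirstOrder.Language} (d : L.Formula (Fin 2)) {k : ℕ}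
    (φ : L.Formula (Fin k)) : Prop :=
  ∃ ψ : L.Formula (Fin k), φ = relativize d ψ

/-- The local `(q, r)`-type of a tuple `u` in `M`: the set of syntactically `r`-local formulas
(w.r.t. the distance formula `d = δ_{≤r}`) of quantifier rank at most `q` satisfied by `u`. -/
def ltp {L : FirstOrder.Language} (d : L.Formula (Fin 2)) (q : ℕ) (M : Type w) [L.Structure M]
    {k : ℕ} (u : Fin k → M) : Set (L.Formula (Fin k)) :=
  {φ | SynLocal d φ ∧ qRank φ ≤ q ∧ φ.Realize u}

/-- The first-order `q`-type of a tuple `u` in `M`: the set of formulas of quantifier rank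
at most `q` (with free variables among `x_0, …, x_{k-1}`) satisfied by `u`. -/
def ftp {L : FirstOrder.Language} (q : ℕ) (M : Type w) [L.Structure M]
    {k : ℕ} (u : Fin k → M) : Set (L.Formula (Fin k)) :=
  {φ | qRank φ ≤ q ∧ φ.Realize u}

/-- The union of two disjoint structures (realized as a structure on the sum type):
a relation holds of a tuple iff the tuple lies entirely in one part and the relation
holds there. -/
def sumStructure (L : FirstOrder.Language) [L.IsRelational] (M N : Type w)
    [L.Structure M] [L.Structure N] : L.Structure (M ⊕ N) where
  funMap f _ := isEmptyElim f
  RelMap R t :=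
    (∃ s, t = Sum.inl ∘ s ∧ Structure.RelMap R s) ∨
    (∃ s, t = Sum.inr ∘ s ∧ Structure.RelMap R s)

/-- The substructure of `M` induced on a subset `S`. -/
def inducedStructure (L : FirstOrder.Language) [L.IsRelational] {M : Type w} [L.Structure M]
    (S : Set M) : L.Structure S where
  funMap f _ := isEmptyElim f
  RelMap R t := Structure.RelMap R fun i => (t i : M)

/-- A formula `φ(x_1, …, x_k)` is `r`-local if for every structure `M` and every tuple `u`,
`M ⊨ φ(u)` iff the substructure induced on the `r`-neighbourhood of `u` satisfies `φ(u)`. -/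
def RLocal.{v} (L : FirstOrder.Language) [L.IsRelational] (r : ℕ) {k : ℕ}
    (φ : L.Formula (Fin k)) : Prop :=
  ∀ (M : Type v) [L.Structure M] (u : Fin k → M),
    φ.Realize u ↔
      (letI := inducedStructure L (nbhd L M r u)
       Formula.Realize (M := nbhd L M r u) φ
         (fun i => ⟨u i, i, distLE_self L M r (u i)⟩))


section Game

variable {L : FirstOrder.Language} {B : Type w} [L.Structure B]

/-- A set of pairs which preserves and reflects equality and all relations. -/
def PartialIso (L : FirstOrder.Language) {B : Type w} [L.Structure B] (Z : Set (B × B)) : Prop :=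
  (∀ x x' y y', (x, x') ∈ Z → (y, y') ∈ Z → (x = y ↔ x' = y')) ∧
    ∀ (n : ℕ) (R : L.Relations n) (t t' : Fin n → B), (∀ i, (t i, t' i) ∈ Z) →
      (Structure.RelMap R t ↔ Structure.RelMap R t')

/-- Duplicator wins the `q`-round Ehrenfeucht–Fraïssé game from position `Z` when moves on the
left are restricted to `S` and moves on the right to `S'`. -/
def EFEquiv (L : FirstOrder.Language) {B : Type w} [L.Structure B] (S S' : Set B) :
    ℕ → Set (B × B) → Prop
  | 0, Z => PartialIso L Z
  | q + 1, Z => PartialIso L Z ∧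
      (∀ c ∈ S, ∃ c' ∈ S', EFEquiv L S S' q (insert (c, c') Z)) ∧
      (∀ c' ∈ S', ∃ c ∈ S, EFEquiv L S S' q (insert (c, c') Z))

theorem PartialIso.mono {Z W : Set (B × B)} (h : PartialIso L Z) (hW : W ⊆ Z) :
    PartialIso L W :=
  ⟨fun x x' y y' hx hy => h.1 x x' y y' (hW hx) (hW hy),
    fun n R t t' ht => h.2 n R t t' fun i => hW (ht i)⟩

theorem PartialIso.swap {Z : Set (B × B)} (h : PartialIso L Z) :
    PartialIso L (Prod.swap ⁻¹' Z) :=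
  ⟨fun x x' y y' hx hy => (h.1 x' x y' y hx hy).symm,
    fun n R t t' ht => (h.2 n R t' t ht).symm⟩

theorem swap_preimage_insert (c c' : B) (Z : Set (B × B)) :
    Prod.swap ⁻¹' (insert (c, c') Z) = insert (c', c) (Prod.swap ⁻¹' Z) := by
  ext ⟨x, y⟩
  simp [and_comm]

namespace EFEquiv

variable {S S' : Set B}

theorem partialIso {q : ℕ} {Z : Set (B × B)} (h : EFEquiv L S S' q Z) : PartialIso L Z := by
  cases q with
  | zero => exact h
  | succ q => exact h.1

theorem mono {q : ℕ} {Z W : Set (B × B)} (h : EFEquiv L S S' q Z) (hW : W ⊆ Z) :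
    EFEquiv L S S' q W := by
  induction q generalizing Z W with
  | zero => exact PartialIso.mono h hW
  | succ q ih =>
    refine ⟨h.1.mono hW, fun c hc => ?_, fun c' hc' => ?_⟩
    · obtain ⟨c', hc', h'⟩ := h.2.1 c hc
      exact ⟨c', hc', ih h' (Set.insert_subset_insert hW)⟩
    · obtain ⟨c, hc, h'⟩ := h.2.2 c' hc'
      exact ⟨c, hc, ih h' (Set.insert_subset_insert hW)⟩

theorem pred {q : ℕ} {Z : Set (B × B)} (h : EFEquiv L S S' (q + 1) Z) : EFEquiv L S S' q Z := by
  induction q generalizing Z with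
  | zero => exact h.1
  | succ q ih =>
    refine ⟨h.1, fun c hc => ?_, fun c' hc' => ?_⟩
    · obtain ⟨c', hc', h'⟩ := h.2.1 c hc
      exact ⟨c', hc', ih h'⟩
    · obtain ⟨c, hc, h'⟩ := h.2.2 c' hc'
      exact ⟨c, hc, ih h'⟩

theorem of_le {p q : ℕ} (hpq : p ≤ q) {Z : Set (B × B)} (h : EFEquiv L S S' q Z) :
    EFEquiv L S S' p Z := by
  induction hpq with
  | refl => exact h
  | step _ ih => exact ih h.pred

theorem swap {q : ℕ} {Z : Set (B × B)} (h : EFEquiv L S S' q Z) :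
    EFEquiv L S' S q (Prod.swap ⁻¹' Z) := by
  induction q generalizing Z with
  | zero => exact PartialIso.swap h
  | succ q ih =>
    refine ⟨h.1.swap, fun c hc => ?_, fun c' hc' => ?_⟩
    · obtain ⟨c', hc', h'⟩ := h.2.2 c hc
      exact ⟨c', hc', by simpa only [swap_preimage_insert] using ih h'⟩
    · obtain ⟨c, hc, h'⟩ := h.2.1 c' hc'
      exact ⟨c, hc, by simpa only [swap_preimage_insert] using ih h'⟩

theorem of_subset_diagonal (S : Set B) (q : ℕ) {Z : Set (B × B)} (hZ : ∀ x y, (x, y) ∈ Z → x = y) :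
    EFEquiv L S S q Z := by
  have hiso : ∀ {Z : Set (B × B)}, (∀ x y, (x, y) ∈ Z → x = y) → PartialIso L Z := by
    intro Z hZ
    refine ⟨fun x x' y y' hx hy => by rw [hZ _ _ hx, hZ _ _ hy], fun n R t t' ht => ?_⟩
    rw [show t = t' from funext fun i => hZ _ _ (ht i)]
  have hins : ∀ {Z : Set (B × B)} (c : B), (∀ x y, (x, y) ∈ Z → x = y) →
      ∀ x y, (x, y) ∈ insert (c, c) Z → x = y := by
    rintro Z c hZ x y (h | h)
    · cases h; rfl
    · exact hZ _ _ h
  induction q generalizing Z with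
  | zero => exact hiso hZ
  | succ q ih =>
    exact ⟨hiso hZ, fun c hc => ⟨c, hc, ih (hins c hZ)⟩, fun c hc => ⟨c, hc, ih (hins c hZ)⟩⟩

theorem comp {S'' : Set B} {q : ℕ} {Z W V : Set (B × B)} (h : EFEquiv L S S' q Z)
    (h' : EFEquiv L S' S'' q W)
    (hV : ∀ x z, (x, z) ∈ V → ∃ y, (x, y) ∈ Z ∧ (y, z) ∈ W) : EFEquiv L S S'' q V := by
  have hiso : ∀ {Z W V : Set (B × B)}, PartialIso L Z → PartialIso L W →
      (∀ x z, (x, z) ∈ V → ∃ y, (x, y) ∈ Z ∧ (y, z) ∈ W) → PartialIso L V := by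
    intro Z W V hZ hW hV
    refine ⟨fun x x' y y' hx hy => ?_, fun n R t t' ht => ?_⟩
    · obtain ⟨u, hu, hu'⟩ := hV _ _ hx
      obtain ⟨v, hv, hv'⟩ := hV _ _ hy
      exact (hZ.1 _ _ _ _ hu hv).trans (hW.1 _ _ _ _ hu' hv')
    · choose s hs hs' using fun i => hV _ _ (ht i)
      exact (hZ.2 n R t s hs).trans (hW.2 n R s t' hs')
  have hins : ∀ {Z W V : Set (B × B)} (c d e : B),
      (∀ x z, (x, z) ∈ V → ∃ y, (x, y) ∈ Z ∧ (y, z) ∈ W) →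
      ∀ x z, (x, z) ∈ insert (c, e) V → ∃ y, (x, y) ∈ insert (c, d) Z ∧ (y, z) ∈ insert (d, e) W := by
    rintro Z W V c d e hV x z (h | h)
    · cases h
      exact ⟨d, Or.inl rfl, Or.inl rfl⟩
    · obtain ⟨y, hy, hy'⟩ := hV _ _ h
      exact ⟨y, Or.inr hy, Or.inr hy'⟩
  induction q generalizing Z W V with
  | zero => exact hiso h h' hV
  | succ q ih =>
    refine ⟨hiso h.1 h'.1 hV, fun c hc => ?_, fun e he => ?_⟩
    · obtain ⟨d, hd, h1⟩ := h.2.1 c hc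
      obtain ⟨e, he, h2⟩ := h'.2.1 d hd
      exact ⟨e, he, ih h1 h2 (hins c d e hV)⟩
    · obtain ⟨d, hd, h2⟩ := h'.2.2 e he
      obtain ⟨c, hc, h1⟩ := h.2.2 d hd
      exact ⟨c, hc, ih h1 h2 (hins c d e hV)⟩

theorem exists_tuple {q n : ℕ} {Z : Set (B × B)} (h : EFEquiv L S S' (q + n) Z) (t : Fin n → B)
    (ht : ∀ i, t i ∈ S) :
    ∃ t' : Fin n → B, EFEquiv L S S' q (Z ∪ Set.range fun i => (t i, t' i)) := by
  induction n generalizing Z with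
  | zero => exact ⟨t, h.mono (by simp)⟩
  | succ n ih =>
    obtain ⟨c', -, h'⟩ := h.2.1 (t 0) (ht 0)
    obtain ⟨t', h''⟩ := ih h' (fun i => t i.succ) fun i => ht _
    refine ⟨Fin.cons c' t', h''.mono ?_⟩
    rintro p (hp | ⟨i, rfl⟩)
    · exact Or.inl (Or.inr hp)
    · refine Fin.cases ?_ (fun i => ?_) i
      · exact Or.inl (Or.inl rfl)
      · exact Or.inr ⟨i, rfl⟩

/-- Passing to smaller sets of admissible moves, when `p` further rounds suffice to detect
membership in them. -/
theorem restrict {T T' : Set B} {p q : ℕ} {Z : Set (B × B)} (h : EFEquiv L S S' (q + p) Z)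
    (hT : T ⊆ S) (hT' : T' ⊆ S')
    (hiff : ∀ W, Z ⊆ W → EFEquiv L S S' p W → ∀ c c', (c, c') ∈ W → (c ∈ T ↔ c' ∈ T')) :
    EFEquiv L T T' q Z := by
  induction q generalizing Z with
  | zero => exact h.partialIso
  | succ q ih =>
    rw [Nat.add_right_comm] at h
    refine ⟨h.1, fun c hc => ?_, fun c' hc' => ?_⟩
    · obtain ⟨c', hc', h'⟩ := h.2.1 c (hT hc)
      exact ⟨c', (hiff _ (Set.subset_insert _ _) (h'.of_le (by omega)) c c' (Or.inl rfl)).1 hc,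
        ih h' fun W hW => hiff W ((Set.subset_insert _ _).trans hW)⟩
    · obtain ⟨c, hc, h'⟩ := h.2.2 c' (hT' hc')
      exact ⟨c, (hiff _ (Set.subset_insert _ _) (h'.of_le (by omega)) c c' (Or.inl rfl)).2 hc',
        ih h' fun W hW => hiff W ((Set.subset_insert _ _).trans hW)⟩

theorem realize_iff [L.IsRelational] {K n : ℕ} (φ : L.BoundedFormula (Fin K) n) {q : ℕ}
    (hq : qRank φ ≤ q) {Z : Set (B × B)} (h : EFEquiv L Set.univ Set.univ q Z)
    {v v' : Fin K → B} {xs xs' : Fin n → B} (hv : ∀ i, (v i, v' i) ∈ Z)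
    (hxs : ∀ i, (xs i, xs' i) ∈ Z) : φ.Realize v xs ↔ φ.Realize v' xs' := by
  have hterm : ∀ {n : ℕ} {xs xs' : Fin n → B} {Z : Set (B × B)}, (∀ i, (v i, v' i) ∈ Z) →
      (∀ i, (xs i, xs' i) ∈ Z) → ∀ t : L.Term (Fin K ⊕ Fin n),
      (t.realize (Sum.elim v xs), t.realize (Sum.elim v' xs')) ∈ Z := by
    intro n xs xs' Z hv hxs t
    cases t with
    | var i => cases i with
      | inl i => exact hv i
      | inr i => exact hxs i
    | func f _ => exact isEmptyElim f
  induction φ generalizing q Z with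
  | falsum => rfl
  | equal t₁ t₂ => exact h.partialIso.1 _ _ _ _ (hterm hv hxs t₁) (hterm hv hxs t₂)
  | rel R ts => exact h.partialIso.2 _ R _ _ fun i => hterm hv hxs (ts i)
  | imp f g ihf ihg =>
    simp only [qRank, max_le_iff] at hq
    exact imp_congr (ihf hq.1 h hv hxs) (ihg hq.2 h hv hxs)
  | all f ih =>
    simp only [qRank] at hq
    obtain ⟨q, rfl⟩ : ∃ p, q = p + 1 := ⟨q - 1, by omega⟩
    have key : ∀ c c', EFEquiv L Set.univ Set.univ q (insert (c, c') Z) →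
        (f.Realize v (Fin.snoc xs c) ↔ f.Realize v' (Fin.snoc xs' c')) := by
      refine fun c c' h' => ih (by omega) h' (fun i => Or.inr (hv i)) fun i => ?_
      refine Fin.lastCases ?_ (fun i => ?_) i
      · simp
      · simpa using Or.inr (hxs i)
    refine ⟨fun H c' => ?_, fun H c => ?_⟩
    · obtain ⟨c, -, h'⟩ := h.2.2 c' trivial
      exact (key c c' h').1 (H c)
    · obtain ⟨c', -, h'⟩ := h.2.1 c trivial
      exact (key c c' h').2 (H c')

end EFEquiv

theorem gaifmanAdj_symm {a b : B} (h : gaifmanAdj L B a b) : gaifmanAdj L B b a := by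
  obtain ⟨hab, n, R, t, hR, ha, hb⟩ := h
  exact ⟨hab.symm, n, R, t, hR, hb, ha⟩

theorem distLE_trans {r s : ℕ} {a b c : B} (h : distLE L B r a b) (h' : distLE L B s b c) :
    distLE L B (r + s) a c := by
  have hmono : ∀ {s : ℕ} {b c : B}, distLE L B s b c → distLE L B (s + 1) b c := by
    intro s
    induction s with
    | zero => exact fun h => Or.inl h
    | succ s ih =>
      rintro b c (h | ⟨e, he, h⟩)
      · exact Or.inl h
      · exact Or.inr ⟨e, he, ih h⟩
  induction r generalizing a with
  | zero =>
    obtain rfl : a = b := h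
    simpa using h'
  | succ r ih =>
    rw [Nat.add_right_comm]
    rcases h with rfl | ⟨e, he, h⟩
    · exact hmono (ih (distLE_self L B r a))
    · exact Or.inr ⟨e, he, ih h⟩

theorem distLE_mono {r s : ℕ} (hrs : r ≤ s) {a b : B} (h : distLE L B r a b) :
    distLE L B s a b := by
  obtain ⟨p, rfl⟩ := Nat.exists_eq_add_of_le hrs
  exact distLE_trans h (distLE_self L B p b)

theorem distLE_one_of_adj {a b : B} (h : gaifmanAdj L B a b) : distLE L B 1 a b :=
  Or.inr ⟨b, h, rfl⟩

theorem distLE_symm {r : ℕ} {a b : B} (h : distLE L B r a b) : distLE L B r b a := by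
  induction r generalizing a with
  | zero => exact Eq.symm h
  | succ r ih =>
    rcases h with rfl | ⟨e, he, h⟩
    · exact distLE_self L B _ a
    · exact distLE_trans (ih h) (distLE_one_of_adj (gaifmanAdj_symm he))

theorem distLE_one_of_relMap {n : ℕ} {R : L.Relations n} {t : Fin n → B}
    (h : Structure.RelMap R t) (i j : Fin n) : distLE L B 1 (t i) (t j) := by
  by_cases hij : t i = t j
  · exact Or.inl hij
  · exact distLE_one_of_adj ⟨hij, n, R, t, h, ⟨i, rfl⟩, ⟨j, rfl⟩⟩

/-- The closed `r`-neighbourhood of a set in the Gaifman graph. -/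
def setNbhd (L : FirstOrder.Language) {B : Type w} [L.Structure B] (r : ℕ) (X : Set B) : Set B :=
  {b | ∃ x ∈ X, distLE L B r x b}

theorem setNbhd_subset {r s p : ℕ} {X Y : Set B} (hX : X ⊆ setNbhd L s Y) (hp : s + r ≤ p) :
    setNbhd L r X ⊆ setNbhd L p Y := by
  rintro b ⟨x, hx, hxb⟩
  obtain ⟨y, hy, hyx⟩ := hX hx
  exact ⟨y, hy, distLE_mono hp (distLE_trans hyx hxb)⟩

theorem subset_setNbhd (r : ℕ) (X : Set B) : X ⊆ setNbhd L r X :=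
  fun x hx => ⟨x, hx, distLE_self L B r x⟩

namespace EFEquiv

variable {S S' : Set B}

theorem distLE_fst_snd {A : ℕ} (hA : ∀ n, L.Relations n → n ≤ A) {r q : ℕ} (hq : r * A ≤ q)
    {Z : Set (B × B)} (h : EFEquiv L S S' q Z) {x x' y y' : B} (hx : (x, x') ∈ Z)
    (hy : (y, y') ∈ Z) (hS : setNbhd L r {x} ⊆ S) (hxy : distLE L B r x y) :
    distLE L B r x' y' := by
  induction r generalizing q Z x x' with
  | zero => exact (h.partialIso.1 _ _ _ _ hx hy).1 hxy
  | succ r ih =>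
    rcases hxy with rfl | ⟨c, ⟨hne, n, R, t, hR, ⟨i, rfl⟩, ⟨j, rfl⟩⟩, hcy⟩
    · exact Or.inl ((h.partialIso.1 _ _ _ _ hx hy).1 rfl)
    · have hn := hA n R
      have hq' : r * A + n ≤ q := by
        rw [Nat.succ_mul] at hq
        omega
      obtain ⟨t', h'⟩ := (h.of_le hq').exists_tuple t fun m =>
        hS ⟨t i, rfl, distLE_mono (by omega) (distLE_one_of_relMap hR i m)⟩
      have hm : ∀ m, (t m, t' m) ∈ Z ∪ Set.range fun i => (t i, t' i) := fun m => Or.inr ⟨m, rfl⟩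
      have hR' := (h'.partialIso.2 n R t t' hm).1 hR
      refine Or.inr ⟨t' j, ⟨?_, n, R, t', hR', ⟨i, ?_⟩, ⟨j, rfl⟩⟩, ?_⟩
      · exact fun he => hne ((h'.partialIso.1 _ _ _ _ (Or.inl hx) (hm j)).2 he)
      · exact (h'.partialIso.1 _ _ _ _ (hm i) (Or.inl hx)).1 rfl
      · refine ih le_rfl h' (hm j) (Or.inl hy) ?_ hcy
        refine (setNbhd_subset (s := 1) (Y := {t i}) ?_ (by omega)).trans hS
        rintro _ rfl
        exact ⟨t i, rfl, distLE_one_of_relMap hR i j⟩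

/-- If duplicator wins a sufficiently long game with moves in sets containing the
`r`-neighbourhoods of the current position, then she also wins the game on those
neighbourhoods. -/
theorem restrict_setNbhd {A : ℕ} (hA : ∀ n, L.Relations n → n ≤ A) {r p q : ℕ}
    {Z : Set (B × B)} (h : EFEquiv L S S' p Z) (hp : q + r * A ≤ p)
    (hS : setNbhd L r (Prod.fst '' Z) ⊆ S) (hS' : setNbhd L r (Prod.snd '' Z) ⊆ S') :
    EFEquiv L (setNbhd L r (Prod.fst '' Z)) (setNbhd L r (Prod.snd '' Z)) q Z := by
  refine (h.of_le hp).restrict hS hS' fun W hZW hW c c' hc => ⟨?_, ?_⟩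
  · rintro ⟨_, ⟨⟨x, x'⟩, hx, rfl⟩, hxc⟩
    refine ⟨x', ⟨_, hx, rfl⟩, hW.distLE_fst_snd hA le_rfl (hZW hx) hc ?_ hxc⟩
    exact (setNbhd_subset (s := 0) (Y := Prod.fst '' Z)
      (Set.singleton_subset_iff.2 ⟨x, ⟨_, hx, rfl⟩, rfl⟩) (by omega)).trans hS
  · rintro ⟨_, ⟨⟨x, x'⟩, hx, rfl⟩, hxc⟩
    refine ⟨x, ⟨_, hx, rfl⟩, hW.swap.distLE_fst_snd hA le_rfl (x := x') (y := c')
      (hZW hx) hc ?_ hxc⟩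
    exact (setNbhd_subset (s := 0) (Y := Prod.snd '' Z)
      (Set.singleton_subset_iff.2 ⟨x', ⟨_, hx, rfl⟩, rfl⟩) (by omega)).trans hS'

/-- Duplicator's strategies on two parts at distance at least two can be played in parallel. -/
theorem union {S₁ S₁' S₂ S₂' : Set B} {q : ℕ} {Z₁ Z₂ : Set (B × B)}
    (h₁ : EFEquiv L S₁ S₁' q Z₁) (h₂ : EFEquiv L S₂ S₂' q Z₂)
    (hd : ∀ x ∈ S₁, ∀ y ∈ S₂, ¬ distLE L B 1 x y)
    (hd' : ∀ x ∈ S₁', ∀ y ∈ S₂', ¬ distLE L B 1 x y)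
    (hZ₁ : Z₁ ⊆ S₁ ×ˢ S₁') (hZ₂ : Z₂ ⊆ S₂ ×ˢ S₂') :
    EFEquiv L (S₁ ∪ S₂) (S₁' ∪ S₂') q (Z₁ ∪ Z₂) := by
  have hrel : ∀ {S₁ S₁' S₂ S₂' : Set B} {Z₁ Z₂ : Set (B × B)},
      (∀ x ∈ S₁, ∀ y ∈ S₂, ¬ distLE L B 1 x y) →
      PartialIso L Z₁ → PartialIso L Z₂ → Z₁ ⊆ S₁ ×ˢ S₁' → Z₂ ⊆ S₂ ×ˢ S₂' →
      ∀ (n : ℕ) (R : L.Relations n) (t t' : Fin n → B), (∀ i, (t i, t' i) ∈ Z₁ ∪ Z₂) →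
      Structure.RelMap R t → Structure.RelMap R t' := by
    intro S₁ S₁' S₂ S₂' Z₁ Z₂ hd h₁ h₂ hZ₁ hZ₂ n R t t' ht hR
    by_cases hall : ∀ i, (t i, t' i) ∈ Z₁
    · exact (h₁.2 n R t t' hall).1 hR
    · push Not at hall
      obtain ⟨i, hi⟩ := hall
      have hi₂ := (ht i).resolve_left hi
      refine (h₂.2 n R t t' fun j => (ht j).resolve_left fun hj => ?_).1 hR
      exact hd _ (hZ₁ hj).1 _ (hZ₂ hi₂).1 (distLE_one_of_relMap hR j i)
  have hiso : ∀ {Z₁ Z₂ : Set (B × B)}, PartialIso L Z₁ → PartialIso L Z₂ →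
      Z₁ ⊆ S₁ ×ˢ S₁' → Z₂ ⊆ S₂ ×ˢ S₂' → PartialIso L (Z₁ ∪ Z₂) := by
    intro Z₁ Z₂ h₁ h₂ hZ₁ hZ₂
    have hne : ∀ {x y}, x ∈ S₁ → y ∈ S₂ → x ≠ y := fun hx hy he => hd _ hx _ hy (Or.inl he)
    have hne' : ∀ {x y}, x ∈ S₁' → y ∈ S₂' → x ≠ y := fun hx hy he => hd' _ hx _ hy (Or.inl he)
    refine ⟨?_, fun n R t t' ht => ⟨hrel hd h₁ h₂ hZ₁ hZ₂ n R t t' ht, ?_⟩⟩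
    · rintro x x' y y' (hx | hx) (hy | hy)
      · exact h₁.1 _ _ _ _ hx hy
      · exact iff_of_false (hne (hZ₁ hx).1 (hZ₂ hy).1) (hne' (hZ₁ hx).2 (hZ₂ hy).2)
      · exact iff_of_false (hne (hZ₁ hy).1 (hZ₂ hx).1).symm (hne' (hZ₁ hy).2 (hZ₂ hx).2).symm
      · exact h₂.1 _ _ _ _ hx hy
    · exact hrel hd' h₁.swap h₂.swap (fun p hp => (hZ₁ hp).symm) (fun p hp => (hZ₂ hp).symm)
        n R t' t ht
  induction q generalizing Z₁ Z₂ with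
  | zero => exact hiso h₁ h₂ hZ₁ hZ₂
  | succ q ih =>
    have hleft : ∀ c ∈ S₁, ∀ c' ∈ S₁', EFEquiv L S₁ S₁' q (insert (c, c') Z₁) →
        EFEquiv L (S₁ ∪ S₂) (S₁' ∪ S₂') q (insert (c, c') (Z₁ ∪ Z₂)) := by
      intro c hc c' hc' h
      rw [← Set.insert_union]
      exact ih h h₂.pred (Set.insert_subset ⟨hc, hc'⟩ hZ₁) hZ₂
    have hright : ∀ c ∈ S₂, ∀ c' ∈ S₂', EFEquiv L S₂ S₂' q (insert (c, c') Z₂) →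
        EFEquiv L (S₁ ∪ S₂) (S₁' ∪ S₂') q (insert (c, c') (Z₁ ∪ Z₂)) := by
      intro c hc c' hc' h
      rw [← Set.union_insert]
      exact ih h₁.pred h hZ₁ (Set.insert_subset ⟨hc, hc'⟩ hZ₂)
    refine ⟨hiso h₁.1 h₂.1 hZ₁ hZ₂, ?_, ?_⟩
    · rintro c (hc | hc)
      · obtain ⟨c', hc', h⟩ := h₁.2.1 c hc
        exact ⟨c', Or.inl hc', hleft c hc c' hc' h⟩
      · obtain ⟨c', hc', h⟩ := h₂.2.1 c hc
        exact ⟨c', Or.inr hc', hright c hc c' hc' h⟩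
    · rintro c' (hc' | hc')
      · obtain ⟨c, hc, h⟩ := h₁.2.2 c' hc'
        exact ⟨c, Or.inl hc, hleft c hc c' hc' h⟩
      · obtain ⟨c, hc, h⟩ := h₂.2.2 c' hc'
        exact ⟨c, Or.inr hc, hright c hc c' hc' h⟩

end EFEquiv

/-- Duplicator wins the `q`-round game on the `r`-neighbourhoods of the two sides of `Z`. -/
def LocalEquiv (L : FirstOrder.Language) {B : Type w} [L.Structure B] (r q : ℕ)
    (Z : Set (B × B)) : Prop :=
  EFEquiv L (setNbhd L r (Prod.fst '' Z)) (setNbhd L r (Prod.snd '' Z)) q Z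

namespace LocalEquiv

theorem swap {r q : ℕ} {Z : Set (B × B)} (h : LocalEquiv L r q Z) :
    LocalEquiv L r q (Prod.swap ⁻¹' Z) := by
  have h₁ : Prod.fst '' (Prod.swap ⁻¹' Z) = Prod.snd '' Z := by ext; simp
  have h₂ : Prod.snd '' (Prod.swap ⁻¹' Z) = Prod.fst '' Z := by ext; simp
  rw [LocalEquiv, h₁, h₂]
  exact EFEquiv.swap h

theorem union {r q : ℕ} {Z₁ Z₂ : Set (B × B)} (h₁ : LocalEquiv L r q Z₁)
    (h₂ : LocalEquiv L r q Z₂)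
    (hd : ∀ x ∈ Prod.fst '' Z₁, ∀ y ∈ Prod.fst '' Z₂, ¬ distLE L B (2 * r + 1) x y)
    (hd' : ∀ x ∈ Prod.snd '' Z₁, ∀ y ∈ Prod.snd '' Z₂, ¬ distLE L B (2 * r + 1) x y) :
    LocalEquiv L r q (Z₁ ∪ Z₂) := by
  have hfar : ∀ {X Y : Set B}, (∀ x ∈ X, ∀ y ∈ Y, ¬ distLE L B (2 * r + 1) x y) →
      ∀ x ∈ setNbhd L r X, ∀ y ∈ setNbhd L r Y, ¬ distLE L B 1 x y := by
    rintro X Y h a ⟨x, hx, hxa⟩ b ⟨y, hy, hyb⟩ hab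
    exact h x hx y hy
      (distLE_mono (by omega) (distLE_trans (distLE_trans hxa hab) (distLE_symm hyb)))
  have hun : ∀ X Y : Set B, setNbhd L r (X ∪ Y) = setNbhd L r X ∪ setNbhd L r Y := by
    intro X Y
    ext b
    simp [setNbhd, or_and_right, exists_or]
  have hsub : ∀ Z : Set (B × B),
      Z ⊆ setNbhd L r (Prod.fst '' Z) ×ˢ setNbhd L r (Prod.snd '' Z) := fun Z p hp =>
    ⟨subset_setNbhd r _ ⟨p, hp, rfl⟩, subset_setNbhd r _ ⟨p, hp, rfl⟩⟩
  rw [LocalEquiv, Set.image_union, Set.image_union, hun, hun]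
  exact EFEquiv.union h₁ h₂ (hfar hd) (hfar hd') (hsub Z₁) (hsub Z₂)

theorem trans_singleton {r q : ℕ} {a b c : B} (h : LocalEquiv L r q {(a, b)})
    (h' : LocalEquiv L r q {(b, c)}) : LocalEquiv L r q {(a, c)} := by
  simp only [LocalEquiv, Set.image_singleton] at *
  refine h.comp h' fun x z hxz => ⟨b, ?_⟩
  simp_all

/-- A far-away point can be matched by a far-away point of the same local type. -/
theorem exists_far {A : ℕ} (hA : ∀ n, L.Relations n → n ≤ A) {r q n ρ r' q' : ℕ}
    (hr' : 3 * ρ + r ≤ r') (hq' : q + r' * A + n + 1 ≤ q') {Z : Set (B × B)}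
    (hZ : Z.encard ≤ n) (h : LocalEquiv L r' q' Z) {c : B}
    (hc : c ∉ setNbhd L (3 * ρ) (Prod.fst '' Z)) :
    ∃ c' ∉ setNbhd L ρ (Prod.snd '' Z), LocalEquiv L r q {(c, c')} := by
  set X := Prod.fst '' Z with hX
  set X' := Prod.snd '' Z with hX'
  by_contra! hno
  have hdA : ∀ s, s ≤ r' → s * A ≤ r' * A := fun s hs => Nat.mul_le_mul_right A hs
  have hball : ∀ {Y : Set B} {y : B} {s : ℕ}, y ∈ setNbhd L ρ Y → ρ + s ≤ r' →
      setNbhd L s {y} ⊆ setNbhd L r' Y := fun hy hs =>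
    setNbhd_subset (Set.singleton_subset_iff.2 hy) hs
  -- a sequence starting at `c`, whose shift is matched with itself
  have hseq : ∀ j ≤ n + 1, ∃ s : ℕ → B, s 0 = c ∧
      (∀ i < j, s (i + 1) ∈ setNbhd L ρ X) ∧ (∀ i < j, s i ∈ setNbhd L ρ X') ∧
      LocalEquiv L r q {(c, s j)} ∧
      EFEquiv L (setNbhd L r' X) (setNbhd L r' X') (q' - j)
        (Z ∪ {p | ∃ i < j, p = (s (i + 1), s i)}) := by
    intro j
    induction j with
    | zero =>
      refine fun _ => ⟨fun _ => c, rfl, by simp, by simp, ?_, ?_⟩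
      · simp only [LocalEquiv, Set.image_singleton]
        exact EFEquiv.of_subset_diagonal _ _ (by simp +contextual)
      · exact EFEquiv.mono h (by simp)
    | succ j ih =>
      intro hj
      obtain ⟨s, hs0, hsX, hsX', hsc, hE⟩ := ih (by omega)
      have hsj : s j ∈ setNbhd L ρ X' := by
        by_contra hcon
        exact hno _ hcon hsc
      rw [show q' - j = (q' - (j + 1)) + 1 by omega] at hE
      obtain ⟨e, -, hE'⟩ := hE.2.2 (s j) (hball (s := 0) hsj (by omega) ⟨_, rfl, rfl⟩)
      have heX : e ∈ setNbhd L ρ X := by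
        obtain ⟨_, ⟨⟨z, z'⟩, hz, rfl⟩, hzs⟩ := hsj
        refine ⟨z, ⟨_, hz, rfl⟩, ?_⟩
        refine hE'.swap.distLE_fst_snd hA (r := ρ) ?_ (x := z') (y := s j)
          (Or.inr (Or.inl hz)) (Or.inl rfl) ?_ hzs
        · have := hdA ρ (by omega)
          omega
        · exact hball ⟨z', ⟨_, hz, rfl⟩, distLE_self L B ρ z'⟩ (by omega)
      have hes : LocalEquiv L r q {(e, s j)} := by
        have := EFEquiv.restrict_setNbhd hA (r := r) (q := q)
          (hE'.mono (W := {(e, s j)}) (by simp)) ?_ ?_ ?_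
        · exact this
        · have := hdA r (by omega)
          omega
        · rw [Set.image_singleton]
          exact hball heX (by omega)
        · rw [Set.image_singleton]
          exact hball hsj (by omega)
      have hse : LocalEquiv L r q {(s j, e)} := by
        have := hes.swap
        rw [← LawfulSingleton.insert_empty_eq, swap_preimage_insert] at this
        simpa using this
      have hup : ∀ i ≤ j, Function.update s (j + 1) e i = s i := fun i hi =>
        Function.update_of_ne (by omega) _ _
      refine ⟨Function.update s (j + 1) e, ?_, ?_, ?_, ?_, ?_⟩
      · rw [hup 0 (by omega), hs0]
      · intro i hi
        rcases Nat.lt_succ_iff_lt_or_eq.1 hi with hi | rfl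
        · rw [hup _ hi]
          exact hsX i hi
        · simpa using heX
      · intro i hi
        rw [hup i (by omega)]
        rcases Nat.lt_succ_iff_lt_or_eq.1 hi with hi | rfl
        · exact hsX' i hi
        · exact hsj
      · simpa using hsc.trans_singleton hse
      · refine hE'.mono ?_
        rintro p (hp | ⟨i, hi, rfl⟩)
        · exact Or.inr (Or.inl hp)
        · rw [hup i (by omega)]
          rcases Nat.lt_succ_iff_lt_or_eq.1 hi with hi | rfl
          · rw [hup _ hi]
            exact Or.inr (Or.inr ⟨i, hi, rfl⟩)
          · simp
  obtain ⟨s, hs0, hsX, hsX', -, hE⟩ := hseq (n + 1) le_rfl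
  have hshift : ∀ i m, i + m ≤ n → distLE L B (2 * ρ) (s i) (s (i + m)) →
      distLE L B (2 * ρ) (s 0) (s m) := by
    intro i
    induction i with
    | zero => simp
    | succ i ih =>
      intro m him hd
      refine ih m (by omega) ?_
      rw [show i + 1 + m = i + m + 1 by omega] at hd
      refine hE.distLE_fst_snd hA ?_ (Or.inr ⟨i, by omega, rfl⟩) (Or.inr ⟨i + m, by omega, rfl⟩)
        (hball (hsX i (by omega)) (by omega)) hd
      have := hdA (2 * ρ) (by omega)
      omega
  have hnear : ∀ i ∈ (Finset.range (n + 1) : Set ℕ), ∃ z ∈ Z, distLE L B ρ z.2 (s i) := by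
    intro i hi
    obtain ⟨_, ⟨z, hz, rfl⟩, hzs⟩ := hsX' i (by simpa using hi)
    exact ⟨z, hz, hzs⟩
  classical
  obtain ⟨f, hf⟩ : ∃ f : ℕ → B × B, ∀ i ∈ (Finset.range (n + 1) : Set ℕ),
      f i ∈ Z ∧ distLE L B ρ (f i).2 (s i) :=
    ⟨fun i => if hi : i ∈ (Finset.range (n + 1) : Set ℕ) then (hnear i hi).choose else (c, c),
      fun i hi => by simpa only [dif_pos hi] using (hnear i hi).choose_spec⟩
  have hcard : Z.encard < (Finset.range (n + 1) : Set ℕ).encard := by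
    rw [Set.encard_coe_eq_coe_finsetCard, Finset.card_range]
    exact hZ.trans_lt (by exact_mod_cast Nat.lt_succ_self n)
  obtain ⟨i, hi, j, hj, hij, hfij⟩ :=
    Set.exists_ne_map_eq_of_encard_lt_of_maps_to hcard (f := f) fun i hi => (hf i hi).1
  wlog hlt : i < j generalizing i j
  · exact this j hj i hi hij.symm hfij.symm (by omega)
  obtain ⟨m, rfl⟩ := Nat.exists_eq_add_of_lt hlt
  have hd : distLE L B (2 * ρ) (s i) (s (i + (m + 1))) := by
    have h2 := (hf _ hj).2
    rw [← hfij] at h2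
    rw [two_mul]
    exact distLE_trans (distLE_symm (hf i hi).2) h2
  have hjn : i + m + 1 < n + 1 := by simpa using hj
  have h0 := hshift i (m + 1) (by omega) hd
  obtain ⟨x, hx, hxs⟩ := hsX m (by omega)
  rw [hs0] at h0
  exact hc ⟨x, hx, distLE_mono (by omega) (distLE_trans hxs (distLE_symm h0))⟩

theorem exists_forth {A : ℕ} (hA : ∀ n, L.Relations n → n ≤ A) {r q n r' q' : ℕ}
    (hr' : 3 * (2 * r + 1) + r ≤ r') (hq' : q + r' * A + n + 1 ≤ q') {Z : Set (B × B)}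
    (hZ : Z.encard ≤ n) (h : LocalEquiv L r' q' Z) (c : B) :
    ∃ c', LocalEquiv L r q (insert (c, c') Z) := by
  have hdA : ∀ s, s ≤ r' → s * A ≤ r' * A := fun s hs => Nat.mul_le_mul_right A hs
  have hself : ∀ X : Set B, X ⊆ setNbhd L (3 * (2 * r + 1)) X := fun X => subset_setNbhd _ X
  by_cases hc : c ∈ setNbhd L (3 * (2 * r + 1)) (Prod.fst '' Z)
  · have hcS : c ∈ setNbhd L r' (Prod.fst '' Z) := by
      obtain ⟨x, hx, hxc⟩ := hc
      exact ⟨x, hx, distLE_mono (by omega) hxc⟩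
    obtain ⟨p, rfl⟩ : ∃ p, q' = p + 1 := ⟨q' - 1, by omega⟩
    obtain ⟨c', -, hE⟩ := h.2.1 c hcS
    have hc' : c' ∈ setNbhd L (3 * (2 * r + 1)) (Prod.snd '' Z) := by
      obtain ⟨_, ⟨⟨z, z'⟩, hz, rfl⟩, hzc⟩ := hc
      refine ⟨z', ⟨_, hz, rfl⟩, hE.distLE_fst_snd hA ?_ (Or.inr hz) (Or.inl rfl) ?_ hzc⟩
      · have := hdA (3 * (2 * r + 1)) (by omega)
        omega
      · exact setNbhd_subset (s := 0)
          (Set.singleton_subset_iff.2 ⟨z, ⟨_, hz, rfl⟩, rfl⟩) (by omega)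
    refine ⟨c', hE.restrict_setNbhd hA ?_ ?_ ?_⟩
    · have := hdA r (by omega)
      omega
    · rw [Set.image_insert_eq]
      exact setNbhd_subset (Set.insert_subset hc (hself _)) hr'
    · rw [Set.image_insert_eq]
      exact setNbhd_subset (Set.insert_subset hc' (hself _)) hr'
  · obtain ⟨c', hc', hcc'⟩ := h.exists_far hA hr' hq' hZ hc
    have hZr : LocalEquiv L r q Z := by
      refine EFEquiv.restrict_setNbhd hA h ?_ ?_ ?_
      · have := hdA r (by omega)
        omega
      · exact setNbhd_subset (hself _) hr'
      · exact setNbhd_subset (hself _) hr'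
    refine ⟨c', ?_⟩
    rw [Set.insert_eq, Set.union_comm]
    refine hZr.union hcc' ?_ ?_
    · rintro x hx y hy hxy
      obtain rfl : y = c := by simpa using hy
      exact hc ⟨x, hx, distLE_mono (by omega) hxy⟩
    · rintro x hx y hy hxy
      obtain rfl : y = c' := by simpa using hy
      exact hc' ⟨x, hx, hxy⟩

/-- Gaifman locality inside a single structure, in terms of games. -/
theorem exists_efEquiv_univ {L : FirstOrder.Language} {A : ℕ} (hA : ∀ n, L.Relations n → n ≤ A)
    (q n : ℕ) :
    ∃ r p : ℕ, ∀ (B : Type w) [L.Structure B] (Z : Set (B × B)), Z.encard ≤ n →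
      LocalEquiv L r p Z → EFEquiv L Set.univ Set.univ q Z := by
  induction q generalizing n with
  | zero => exact ⟨0, 0, fun B _ Z _ h => h⟩
  | succ q ih =>
    obtain ⟨r, p, hrp⟩ := ih (n + 1)
    refine ⟨3 * (2 * r + 1) + r, p + (3 * (2 * r + 1) + r) * A + n + 1, fun B _ Z hZ h => ?_⟩
    have hins : ∀ (Y : Set (B × B)) (x : B × B), Y.encard ≤ n →
        (insert x Y).encard ≤ (n + 1 : ℕ) := by
      intro Y x hY
      refine (Set.encard_insert_le _ _).trans ?_
      push_cast
      gcongr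
    refine ⟨EFEquiv.partialIso h, fun c _ => ?_, fun c' _ => ?_⟩
    · obtain ⟨c', hc'⟩ := h.exists_forth hA le_rfl le_rfl hZ c
      exact ⟨c', trivial, hrp B _ (hins _ _ hZ) hc'⟩
    · have hZ' : (Prod.swap ⁻¹' Z).encard ≤ n := by
        rwa [← Set.image_swap_eq_preimage_swap, Prod.swap_injective.encard_image]
      obtain ⟨c, hc⟩ := h.swap.exists_forth hA le_rfl le_rfl hZ' c'
      refine ⟨c, trivial, hrp B _ (hins _ _ hZ) ?_⟩
      have := hc.swap
      rwa [swap_preimage_insert, ← Set.preimage_comp, Prod.swap_swap_eq, Set.preimage_id] at this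

end LocalEquiv

end Game

section LocalTypes

variable {L : FirstOrder.Language} {B : Type w} [L.Structure B]

/-- The predicate `P` is defined on `B` by a relativised formula of quantifier rank at most `p`. -/
def LocallyDefinable (d : L.Formula (Fin 2)) (p : ℕ) {K n : ℕ}
    (P : (Fin K → B) → (Fin n → B) → Prop) : Prop :=
  ∃ ψ : L.BoundedFormula (Fin K) n, qRank (relativize d ψ) ≤ p ∧
    ∀ a b, (relativize d ψ).Realize a b ↔ P a b

/-- The formula expressing that the last variable satisfies `d` together with some centre. -/
def nearFormula (d : L.Formula (Fin 2)) (K n : ℕ) : L.BoundedFormula (Fin K) (n + 1) :=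
  ((List.finRange K).map fun i =>
    BoundedFormula.relabel
      (![Sum.inl i, Sum.inr (Fin.last n)] : Fin 2 → (Fin K) ⊕ (Fin (n + 1))) d).foldr (· ⊔ ·) ⊥

namespace LocallyDefinable

variable {d : L.Formula (Fin 2)} {p K n : ℕ} {P P' : (Fin K → B) → (Fin n → B) → Prop}

theorem of_le {p' : ℕ} (hp : p ≤ p') (h : LocallyDefinable d p P) : LocallyDefinable d p' P := by
  obtain ⟨ψ, hψ, h⟩ := h
  exact ⟨ψ, hψ.trans hp, h⟩

theorem not (h : LocallyDefinable d p P) : LocallyDefinable d p fun a b => ¬ P a b := by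
  obtain ⟨ψ, hψ, h⟩ := h
  refine ⟨ψ.imp .falsum, by simpa [relativize, qRank] using hψ, fun a b => ?_⟩
  simp only [relativize, BoundedFormula.realize_imp, h]
  rfl

theorem and (h : LocallyDefinable d p P) (h' : LocallyDefinable d p P') :
    LocallyDefinable d p fun a b => P a b ∧ P' a b := by
  obtain ⟨ψ, hψ, h⟩ := h
  obtain ⟨χ, hχ, h'⟩ := h'
  refine ⟨(ψ.imp (χ.imp .falsum)).imp .falsum, by simp [relativize, qRank, hψ, hχ],
    fun a b => ?_⟩
  simp only [relativize, BoundedFormula.realize_imp, h, h']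
  change ((_ → (_ → False)) → False) ↔ _
  tauto

theorem forall_mem {s : Set ((Fin K → B) → (Fin n → B) → Prop)} (hs : s.Finite)
    (h : ∀ P ∈ s, LocallyDefinable d p P) (T : Set ((Fin K → B) → (Fin n → B) → Prop)) :
    LocallyDefinable d p fun a b => ∀ P ∈ s, (P a b ↔ P ∈ T) := by
  induction s, hs using Set.Finite.induction_on with
  | empty =>
    refine ⟨BoundedFormula.imp .falsum .falsum, by simp [relativize, qRank], fun a b => ?_⟩
    simp only [relativize, BoundedFormula.realize_imp, imp_self, Set.mem_empty_iff_false,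
      false_imp_iff, implies_true]
  | @insert P s _ _ ih =>
    have h₁ : LocallyDefinable d p fun a b => P a b ↔ P ∈ T := by
      by_cases hP : P ∈ T
      · simpa [hP] using h P (Set.mem_insert _ _)
      · simpa [hP] using (h P (Set.mem_insert _ _)).not
    simpa using h₁.and (ih fun P hP => h P (Set.mem_insert_of_mem _ hP))

theorem exists_near {r : ℕ} (hd : IsDistFormula.{w} L r d)
    {P : (Fin K → B) → (Fin (n + 1) → B) → Prop} (h : LocallyDefinable d p P) :
    LocallyDefinable d (max (qRank (nearFormula d K n)) p + 1) fun a (b : Fin n → B) =>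
      ∃ c ∈ setNbhd L r (Set.range a), P a (Fin.snoc b c) := by
  obtain ⟨ψ, hψ, h⟩ := h
  have hnear : ∀ (a : Fin K → B) (b : Fin n → B) (c : B),
      (nearFormula d K n).Realize a (Fin.snoc b c) ↔ c ∈ setNbhd L r (Set.range a) := by
    intro a b c
    have hrel : ∀ i, (BoundedFormula.relabel (![Sum.inl i, Sum.inr (Fin.last n)] :
        Fin 2 → (Fin K) ⊕ (Fin (n + 1))) d).Realize a (Fin.snoc b c : Fin (n + 1) → B) ↔
        distLE L B r (a i) c := by
      intro i
      rw [← hd B (a i) c]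
      erw [BoundedFormula.realize_relabel]
      rw [Formula.Realize]
      have h₁ : Sum.elim a ((Fin.snoc b c : Fin (n + 1) → B) ∘ Fin.castAdd 0) ∘
          (![Sum.inl i, Sum.inr (Fin.last n)] : Fin 2 → (Fin K) ⊕ (Fin (n + 1))) =
          ![a i, c] := by
        funext j
        refine Fin.cases ?_ (fun j => ?_) j
        · rfl
        · rw [Subsingleton.elim j 0]
          exact Fin.snoc_last (α := fun _ => B) c b
      rw [h₁]
      exact iff_of_eq (congrArg _ (Subsingleton.elim _ _))
    simp [nearFormula, BoundedFormula.realize_foldr_sup, hrel, setNbhd]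
  refine ⟨(ψ.imp .falsum).all.imp .falsum, ?_, fun a b => ?_⟩
  · simp only [relativize, qRank]
    change max (max (qRank (nearFormula d K n)) _ + 1) 0 ≤ _
    simp only [Nat.max_zero]
    omega
  · simp only [relativize, BoundedFormula.realize_imp, BoundedFormula.realize_all]
    change ((∀ c, ((nearFormula d K n).Realize a (Fin.snoc b c) → (_ → False))) → False) ↔ _
    simp only [hnear, h]
    exact ⟨fun H => by_contra fun hne => H fun c hc hP => hne ⟨c, hc, hP⟩,
      fun ⟨c, hc, hP⟩ H => H c hc hP⟩

end LocallyDefinable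

theorem exists_atomic_set [L.IsRelational] [Finite L.Symbols] (d : L.Formula (Fin 2)) (K n : ℕ) :
    ∃ Φ : Set ((Fin K → B) → (Fin n → B) → Prop), Φ.Finite ∧
      (∀ P ∈ Φ, LocallyDefinable d 0 P) ∧
      ∀ a a' b b', (∀ P ∈ Φ, (P a b ↔ P a' b')) →
        PartialIso L ((Set.range fun i => (a i, a' i)) ∪ Set.range fun i => (b i, b' i)) := by
  have : Finite (Σ l, L.Relations l) :=
    Finite.of_injective (fun R => (Sum.inr R : L.Symbols)) Sum.inr_injective
  refine ⟨(Set.range fun f : (Fin K ⊕ Fin n) × (Fin K ⊕ Fin n) =>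
      fun (a : Fin K → B) (b : Fin n → B) => Sum.elim a b f.1 = Sum.elim a b f.2) ∪
    Set.range fun f : Σ R : (Σ l, L.Relations l), (Fin R.1 → Fin K ⊕ Fin n) =>
      fun (a : Fin K → B) (b : Fin n → B) =>
        Structure.RelMap f.1.2 fun i => Sum.elim a b (f.2 i),
    (Set.finite_range _).union (Set.finite_range _), ?_, ?_⟩
  · rintro _ (⟨f, rfl⟩ | ⟨f, rfl⟩)
    · exact ⟨.equal (.var f.1) (.var f.2), by simp [relativize, qRank], fun a b => by
        rw [relativize]; rfl⟩
    · exact ⟨.rel f.1.2 fun i => .var (f.2 i), by simp [relativize, qRank], fun a b => by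
        rw [relativize]; rfl⟩
  · intro a a' b b' h
    have hidx : ∀ x x', (x, x') ∈ (Set.range fun i => (a i, a' i)) ∪
        (Set.range fun i => (b i, b' i)) → ∃ f, Sum.elim a b f = x ∧ Sum.elim a' b' f = x' := by
      rintro x x' (⟨i, hi⟩ | ⟨i, hi⟩)
      · cases hi
        exact ⟨Sum.inl i, rfl, rfl⟩
      · cases hi
        exact ⟨Sum.inr i, rfl, rfl⟩
    refine ⟨fun x x' y y' hx hy => ?_, fun l R t t' ht => ?_⟩
    · obtain ⟨f, rfl, rfl⟩ := hidx _ _ hx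
      obtain ⟨g, rfl, rfl⟩ := hidx _ _ hy
      exact h _ (Or.inl ⟨(f, g), rfl⟩)
    · choose f hf hf' using fun i => hidx _ _ (ht i)
      obtain rfl : (fun i => Sum.elim a b (f i)) = t := funext hf
      obtain rfl : (fun i => Sum.elim a' b' (f i)) = t' := funext hf'
      exact h _ (Or.inr ⟨⟨⟨l, R⟩, f⟩, rfl⟩)

theorem exists_locallyDefinable_set {L : FirstOrder.Language} [L.IsRelational] [Finite L.Symbols]
    {r : ℕ} {d : L.Formula (Fin 2)} (hd : IsDistFormula.{w} L r d) (K q n : ℕ) :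
    ∃ p : ℕ, ∀ (B : Type w) [L.Structure B],
      ∃ Φ : Set ((Fin K → B) → (Fin n → B) → Prop), Φ.Finite ∧
        (∀ P ∈ Φ, LocallyDefinable d p P) ∧
        ∀ a a' b b', (∀ P ∈ Φ, (P a b ↔ P a' b')) →
          EFEquiv L (setNbhd L r (Set.range a)) (setNbhd L r (Set.range a')) q
            ((Set.range fun i => (a i, a' i)) ∪ Set.range fun i => (b i, b' i)) := by
  induction q generalizing n with
  | zero => exact ⟨0, fun B _ => exists_atomic_set d K n⟩
  | succ q ih =>
    obtain ⟨p, hp⟩ := ih (n + 1)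
    refine ⟨max (qRank (nearFormula d K n)) p + 1, fun B _ => ?_⟩
    obtain ⟨Φ₀, hfin₀, hdef₀, hiso⟩ := exists_atomic_set (L := L) (B := B) d K n
    obtain ⟨Φ, hfin, hdef, hE⟩ := hp B
    refine ⟨Φ₀ ∪ (fun T a b => ∃ c ∈ setNbhd L r (Set.range a), ∀ P ∈ Φ,
      (P a (Fin.snoc b c) ↔ P ∈ T)) '' Φ.powerset, hfin₀.union (hfin.finite_subsets.image _),
      ?_, ?_⟩
    · rintro _ (hP | ⟨T, -, rfl⟩)
      · exact (hdef₀ _ hP).of_le (by omega)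
      · exact (LocallyDefinable.forall_mem hfin hdef T).exists_near hd
    · have hforth : ∀ (a a' : Fin K → B) (b b' : Fin n → B),
          (∀ T ∈ Φ.powerset,
            (∃ c ∈ setNbhd L r (Set.range a), ∀ P ∈ Φ, (P a (Fin.snoc b c) ↔ P ∈ T)) →
            ∃ c ∈ setNbhd L r (Set.range a'), ∀ P ∈ Φ, (P a' (Fin.snoc b' c) ↔ P ∈ T)) →
          ∀ c ∈ setNbhd L r (Set.range a), ∃ c' ∈ setNbhd L r (Set.range a'),
            ∀ P ∈ Φ, (P a (Fin.snoc b c) ↔ P a' (Fin.snoc b' c')) := by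
        intro a a' b b' h c hc
        obtain ⟨c', hc', h'⟩ := h {P ∈ Φ | P a (Fin.snoc b c)} (fun P hP => hP.1)
          ⟨c, hc, fun P hP => ⟨fun h => ⟨hP, h⟩, fun h => h.2⟩⟩
        exact ⟨c', hc', fun P hP =>
          ⟨fun h => (h' P hP).2 ⟨hP, h⟩, fun h => ((h' P hP).1 h).2⟩⟩
      intro a a' b b' h
      have hsub : ∀ c c' : B, insert (c, c') ((Set.range fun i => (a i, a' i)) ∪
          Set.range fun i => (b i, b' i)) ⊆ (Set.range fun i => (a i, a' i)) ∪
          Set.range fun i => ((Fin.snoc b c : Fin (n + 1) → B) i,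
            (Fin.snoc b' c' : Fin (n + 1) → B) i) := by
        rintro c c' x (rfl | hx | ⟨i, rfl⟩)
        · exact Or.inr ⟨Fin.last n, by simp⟩
        · exact Or.inl hx
        · exact Or.inr ⟨i.castSucc, by simp⟩
      refine ⟨hiso a a' b b' fun P hP => h P (Or.inl hP), fun c hc => ?_, fun c' hc' => ?_⟩
      · obtain ⟨c', hc', h'⟩ := hforth a a' b b'
          (fun T hT => (h _ (Or.inr ⟨T, hT, rfl⟩)).1) c hc
        exact ⟨c', hc', (hE a a' _ _ h').mono (hsub c c')⟩
      · obtain ⟨c, hc, h'⟩ := hforth a' a b' b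
          (fun T hT => (h _ (Or.inr ⟨T, hT, rfl⟩)).2) c' hc'
        exact ⟨c, hc, (hE a a' _ _ fun P hP => (h' P hP).symm).mono (hsub c c')⟩

/-- Tuples of equal local types of sufficiently high quantifier rank are locally equivalent. -/
theorem exists_localEquiv_of_ltp_eq {L : FirstOrder.Language} [L.IsRelational] [Finite L.Symbols]
    {r : ℕ} {d : L.Formula (Fin 2)} (hd : IsDistFormula.{w} L r d) (K q : ℕ) :
    ∃ p₀ : ℕ, ∀ p ≥ p₀, ∀ (B : Type w) [L.Structure B] (a a' : Fin K → B),
      ltp d p B a = ltp d p B a' → LocalEquiv L r q (Set.range fun i => (a i, a' i)) := by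
  obtain ⟨p₀, hp₀⟩ := exists_locallyDefinable_set hd K q 0
  refine ⟨p₀, fun p hp B _ a a' h => ?_⟩
  obtain ⟨Φ, -, hdef, hE⟩ := hp₀ B
  have hE := hE a a' default default fun P hP => by
    obtain ⟨ψ, hψ, hP⟩ := hdef P hP
    rw [← hP, ← hP]
    have hψp := hψ.trans hp
    exact ⟨fun H => ((Set.ext_iff.1 h _).1 ⟨⟨ψ, rfl⟩, hψp, H⟩).2.2,
      fun H => ((Set.ext_iff.1 h _).2 ⟨⟨ψ, rfl⟩, hψp, H⟩).2.2⟩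
  have h₁ : Prod.fst '' (Set.range fun i => (a i, a' i)) = Set.range a := by
    rw [← Set.range_comp]; rfl
  have h₂ : Prod.snd '' (Set.range fun i => (a i, a' i)) = Set.range a' := by
    rw [← Set.range_comp]; rfl
  rw [LocalEquiv, h₁, h₂]
  exact hE.mono Set.subset_union_left

end LocalTypes

/-- key step in Lemma 4.2: for all `k, ℓ, q` there are `q*, r*` such that for
every structure `B`, every formula `φ(x̄; ȳ)` of quantifier rank at most `q`, every parameter
tuple `v̄ = v̄° v̄•` split at `m ≤ ℓ`, and instance tuples `ū, ū'` such that
`N_{r*}(ū v̄°)` and `N_{r*}(ū' v̄°)` are disjoint from `N_{r*}(v̄•)` and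
`ltp_{q*,r*}(B, ū v̄°) = ltp_{q*,r*}(B, ū' v̄°)`, we have `B ⊨ φ(ū; v̄) ↔ B ⊨ φ(ū'; v̄)`. -/
theorem statement_3 {L : FirstOrder.Language} [L.IsRelational] [Finite L.Symbols]
    (k ℓ q : ℕ) (d : ℕ → L.Formula (Fin 2)) (hd : ∀ r, IsDistFormula.{w} L r (d r)) :
    ∃ qs rs : ℕ, ∀ (B : Type w) [L.Structure B]
      (φ : L.Formula (Fin (k + ℓ))), qRank φ ≤ q →
      ∀ (v : Fin ℓ → B) (m : ℕ) (hm : m ≤ ℓ) (u u' : Fin k → B),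
        nbhd L B rs (Fin.append u fun i : Fin m => v (Fin.castLE hm i)) ∩
            nbhd L B rs (fun i : Fin (ℓ - m) =>
              v (Fin.cast (Nat.add_sub_cancel' hm) (Fin.natAdd m i))) = ∅ →
        nbhd L B rs (Fin.append u' fun i : Fin m => v (Fin.castLE hm i)) ∩
            nbhd L B rs (fun i : Fin (ℓ - m) =>
              v (Fin.cast (Nat.add_sub_cancel' hm) (Fin.natAdd m i))) = ∅ →
        ltp (d rs) qs B (Fin.append u fun i : Fin m => v (Fin.castLE hm i)) =
          ltp (d rs) qs B (Fin.append u' fun i : Fin m => v (Fin.castLE hm i)) →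
        (φ.Realize (Fin.append u v) ↔ φ.Realize (Fin.append u' v)) := by
  obtain ⟨A, hA⟩ : ∃ A, ∀ n, L.Relations n → n ≤ A := by
    have : Finite (Σ l, L.Relations l) :=
      Finite.of_injective (fun R => (Sum.inr R : L.Symbols)) Sum.inr_injective
    obtain ⟨A, hA⟩ := (Set.finite_range fun R : (Σ l, L.Relations l) => R.1).bddAbove
    exact ⟨A, fun n R => hA ⟨⟨n, R⟩, rfl⟩⟩
  obtain ⟨r, p, hrp⟩ := LocalEquiv.exists_efEquiv_univ.{w} hA q (k + ℓ)
  set rs := 2 * r + 1 with hrs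
  choose p₀ hp₀ using fun m : ℕ => exists_localEquiv_of_ltp_eq (hd rs) (k + m) (p + r * A)
  refine ⟨(Finset.range (ℓ + 1)).sup p₀, rs, fun B _ φ hφ v m hm u u' hu hu' hltp => ?_⟩
  set a := Fin.append u fun i : Fin m => v (Fin.castLE hm i) with ha
  set a' := Fin.append u' fun i : Fin m => v (Fin.castLE hm i) with ha'
  set b := fun i : Fin (ℓ - m) => v (Fin.cast (Nat.add_sub_cancel' hm) (Fin.natAdd m i)) with hb
  have hloc := hp₀ m _ (Finset.le_sup (Finset.mem_range.2 (by omega))) B a a' hltp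
  have hloc : LocalEquiv L r p (Set.range fun i => (a i, a' i)) := by
    refine EFEquiv.restrict_setNbhd hA hloc le_rfl ?_ ?_ <;>
    exact setNbhd_subset (subset_setNbhd 0 _) (by omega)
  have hdiag : LocalEquiv L r p (Set.range fun i => (b i, b i)) := by
    rw [LocalEquiv, ← Set.range_comp, ← Set.range_comp]
    exact EFEquiv.of_subset_diagonal _ _ (by rintro x y ⟨i, hi⟩; cases hi; rfl)
  have hfar : ∀ c : Fin (k + m) → B, nbhd L B rs c ∩ nbhd L B rs b = ∅ →
      ∀ i j, ¬ distLE L B rs (c i) (b j) := fun c hc i j hij =>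
    (Set.eq_empty_iff_forall_notMem.1 hc) (b j) ⟨⟨i, hij⟩, j, distLE_self L B rs (b j)⟩
  have hunion := hloc.union hdiag
    (by rintro _ ⟨_, ⟨i, rfl⟩, rfl⟩ _ ⟨_, ⟨j, rfl⟩, rfl⟩; exact hfar a hu i j)
    (by rintro _ ⟨_, ⟨i, rfl⟩, rfl⟩ _ ⟨_, ⟨j, rfl⟩, rfl⟩; exact hfar a' hu' i j)
  have hcard : ∀ {N : ℕ} (f : Fin N → B × B), (Set.range f).encard ≤ N := by
    intro N f
    rw [← Set.image_univ]
    exact (Set.encard_image_le _ _).trans (by simp)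
  have hE := hrp B _ ((Set.encard_union_le _ _).trans <|
    (add_le_add (hcard _) (hcard _)).trans (by norm_cast; omega)) hunion
  refine EFEquiv.realize_iff φ hφ hE (fun i => ?_) finZeroElim
  refine Fin.addCases (fun i => ?_) (fun i => ?_) i
  · exact Or.inl ⟨Fin.castAdd m i, by simp [ha, ha']⟩
  · rw [Fin.append_right, Fin.append_right]
    by_cases him : (i : ℕ) < m
    · exact Or.inl ⟨Fin.natAdd k ⟨i, him⟩, by simp only [ha, ha', Fin.append_right]; rfl⟩
    · have hi : Fin.cast (Nat.add_sub_cancel' hm) (Fin.natAdd m ⟨i - m, by omega⟩) = i :=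
        Fin.ext (by simp; omega)
      exact Or.inr ⟨⟨i - m, by omega⟩, by simp only [hb, hi]⟩
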